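/- Let d, k ≥ 1 and n ≥ 2. For all T₁, T₂ ∈ RTM_fix(ℤ^d,n,k) one has α(T₁ ∘ T₂) = α(T₁) + α(T₂); that is, the average movement α : RTM_fix(ℤ^d,n,k) → ℚ^d is a group homomorphism. -/

import Mathlib

open Function

/-- `ℤ^d`. -/
abbrev V (d : ℕ) : Type := Fin d → ℤ

/-- The configuration space `Σ^{ℤ^d} × Q` of the moving-tape model. -/
abbrev Cfg (d n k : ℕ) : Type := (V d → Fin n) × Fin k

/-- `TapeDefinedBy F F' f T` : `T` is the moving-tape Turing machine defined by the
local rule `f`: if `f(x|_F, q) = (p, q', u)` then `T(x,q) = (σ_u y, q')` where `y`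
agrees with `x` outside `F'` and equals `p` on `F'`. -/
def TapeDefinedBy {d n k : ℕ} (F F' : Finset (V d))
    (f : (V d → Fin n) → Fin k → (V d → Fin n) × Fin k × V d)
    (T : Cfg d n k → Cfg d n k) : Prop :=
  -- `f` only depends on the restriction of the tape to `F`, and only the
  -- restriction of its tape output to `F'` matters:
  (∀ x x' q, (∀ v ∈ F, x v = x' v) →
      (∀ v ∈ F', (f x q).1 v = (f x' q).1 v) ∧ (f x q).2 = (f x' q).2) ∧
  -- the machine equation:
  (∀ (x : V d → Fin n) (q : Fin k),
    (T (x, q)).2 = (f x q).2.1 ∧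
    ∀ t, (T (x, q)).1 t =
      if t - (f x q).2.2 ∈ F' then (f x q).1 (t - (f x q).2.2)
      else x (t - (f x q).2.2))

/-- A moving-tape `(d,n,k)`-Turing machine. -/
def IsTMfix {d n k : ℕ} (T : Cfg d n k → Cfg d n k) : Prop :=
  ∃ F F' f, TapeDefinedBy F F' f T

/-- The sup-norm `‖v‖_∞` of `v ∈ ℤ^d`, as a natural number. -/
def supnorm {d : ℕ} (v : V d) : ℕ := Finset.univ.sup fun i => (v i).natAbs

/-- `s` is a (continuous) shift indicator for the moving-tape machine `T`:
`T(x,q)₁` agrees with `σ_{s(x,q)}(x)` outside a bounded region. -/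
def ShiftIndicator {d n k : ℕ} (T : Cfg d n k → Cfg d n k) (s : Cfg d n k → V d) : Prop :=
  Continuous s ∧ ∃ a : ℕ, ∀ (c : Cfg d n k) (v : V d),
    a ≤ supnorm v → (T c).1 v = c.1 (v - s c)

/-- Cylinder sets. -/
def cyl {d n k : ℕ} (G : Finset (V d)) (p : V d → Fin n) (q : Fin k) : Set (Cfg d n k) :=
  {c | c.2 = q ∧ ∀ v ∈ G, c.1 v = p v}

theorem cyl_isOpen {d n k : ℕ} (G : Finset (V d)) (p : V d → Fin n) (q : Fin k) :
    IsOpen (cyl G p q) := by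
  have : cyl G p q = (fun c : Cfg d n k => c.2) ⁻¹' {q} ∩
      ⋂ v ∈ G, (fun c : Cfg d n k => c.1 v) ⁻¹' {p v} := by
    ext c; simp [cyl]
  rw [this]
  refine IsOpen.inter ((isOpen_discrete _).preimage continuous_snd) ?_
  refine isOpen_biInter_finset fun v _ => (isOpen_discrete _).preimage ?_
  exact (continuous_apply v).comp continuous_fst

theorem cyl_self {d n k : ℕ} (G : Finset (V d)) (c : Cfg d n k) : c ∈ cyl G c.1 c.2 :=
  ⟨rfl, fun _ _ => rfl⟩

theorem cyl_nhds {d n k : ℕ} (c : Cfg d n k) (U : Set (Cfg d n k)) (hU : U ∈ nhds c) :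
    ∃ G : Finset (V d), cyl G c.1 c.2 ⊆ U := by
  rw [mem_nhds_prod_iff] at hU
  obtain ⟨A, hA, B, hB, hAB⟩ := hU
  obtain ⟨A', hA', hA'o, hcA'⟩ := mem_nhds_iff.1 hA
  rw [isOpen_pi_iff] at hA'o
  obtain ⟨G, u, hu, hG⟩ := hA'o _ hcA'
  refine ⟨G, fun x hx => hAB ⟨hA' (hG ?_), ?_⟩⟩
  · intro v hv
    rw [hx.2 v hv]
    exact (hu v hv).2
  · have := hx.1
    rw [this]
    exact mem_of_mem_nhds hB

theorem cont_of_window {d n k : ℕ} {Y : Type*} [TopologicalSpace Y]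
    (g : Cfg d n k → Y)
    (h : ∀ c, ∃ G : Finset (V d), ∀ c' ∈ cyl G c.1 c.2, g c' = g c) : Continuous g := by
  rw [continuous_iff_continuousAt]
  intro c
  obtain ⟨G, hG⟩ := h c
  have : g =ᶠ[nhds c] fun _ => g c :=
    Filter.mem_of_superset ((cyl_isOpen G c.1 c.2).mem_nhds (cyl_self G c)) hG
  exact (continuousAt_const).congr this.symm

theorem window_of_cont {d n k : ℕ} {Y : Type*} [TopologicalSpace Y] [DiscreteTopology Y]
    (g : Cfg d n k → Y) (hg : Continuous g) (c : Cfg d n k) :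
    ∃ G : Finset (V d), ∀ c' ∈ cyl G c.1 c.2, g c' = g c := by
  obtain ⟨G, hG⟩ := cyl_nhds c (g ⁻¹' {g c})
    (((isOpen_discrete _).preimage hg).mem_nhds rfl)
  exact ⟨G, fun c' hc' => hG hc'⟩

theorem cyl_mono {d n k : ℕ} {G H : Finset (V d)} (h : G ⊆ H) (p : V d → Fin n) (q : Fin k) :
    cyl H p q ⊆ cyl G p q := fun _ hc => ⟨hc.1, fun v hv => hc.2 v (h hv)⟩

theorem TM_cont {d n k : ℕ} {T : Cfg d n k → Cfg d n k} (hT : IsTMfix T) : Continuous T := by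
  obtain ⟨F, F', f, hf, hTf⟩ := hT
  refine Continuous.prodMk (f := fun c => (T c).1) (g := fun c => (T c).2)
    (continuous_pi fun t => ?_) ?_
  · refine cont_of_window _ fun c => ⟨F ∪ {t - (f c.1 c.2).2.2}, ?_⟩
    rintro ⟨x, q⟩ ⟨hq, hx⟩
    obtain ⟨x₀, q₀⟩ := c
    simp only at hq hx
    subst hq
    obtain ⟨e1, e2⟩ := hf x x₀ q fun v hv => hx v (Finset.mem_union_left _ hv)
    have e3 := hx (t - (f x₀ q).2.2) (by simp)
    simp only [(hTf _ _).2, e2]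
    split_ifs with h
    · exact e1 _ h
    · exact e3
  · refine cont_of_window _ fun c => ⟨F, ?_⟩
    rintro ⟨x, q⟩ ⟨hq, hx⟩
    obtain ⟨x₀, q₀⟩ := c
    simp only at hq hx
    subst hq
    obtain ⟨e1, e2⟩ := hf x x₀ q hx
    simp only [(hTf _ _).1, e2]

theorem image_cyl {d n k : ℕ} {T : Cfg d n k → Cfg d n k} {F F' : Finset (V d)}
    {f : (V d → Fin n) → Fin k → (V d → Fin n) × Fin k × V d}
    (h : TapeDefinedBy F F' f T) (G : Finset (V d)) (hF : F ⊆ G) (hF' : F' ⊆ G)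
    (p : V d → Fin n) (q : Fin k) :
    ∃ (G' : Finset (V d)) (p' : V d → Fin n) (q' : Fin k), G'.card = G.card ∧
      T '' cyl G p q = cyl G' p' q' := by
  obtain ⟨hf, hTf⟩ := h
  refine ⟨G.map (addRightEmbedding (f p q).2.2),
    fun t => if t - (f p q).2.2 ∈ F' then (f p q).1 (t - (f p q).2.2)
      else p (t - (f p q).2.2), (f p q).2.1, Finset.card_map _, ?_⟩
  apply Set.Subset.antisymm
  · rintro _ ⟨⟨x, q₀⟩, ⟨hq, hx⟩, rfl⟩
    simp only at hq hx
    subst hq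
    obtain ⟨e1, e2⟩ := hf x p q₀ fun v hv => hx v (hF hv)
    refine ⟨by rw [(hTf _ _).1, e2], fun t ht => ?_⟩
    obtain ⟨g, hg, rfl⟩ := Finset.mem_map.1 ht
    simp only [(hTf _ _).2, e2, addRightEmbedding_apply, add_sub_cancel_right]
    split_ifs with h
    · exact e1 _ h
    · exact hx _ hg
  · rintro ⟨y, q'⟩ ⟨hq, hy⟩
    simp only at hq hy
    have hxp : ∀ v ∈ G, (fun v => if v ∈ G then p v else y (v + (f p q).2.2)) v = p v := by
      intro v hv; simp [hv]
    refine ⟨(fun v => if v ∈ G then p v else y (v + (f p q).2.2), q), ⟨rfl, hxp⟩, ?_⟩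
    obtain ⟨e1, e2⟩ := hf _ p q fun v hv => hxp v (hF hv)
    refine Prod.ext ?_ ?_
    · funext t
      rw [(hTf _ _).2, e2]
      by_cases hG : t - (f p q).2.2 ∈ G
      · have := hy t (Finset.mem_map.2 ⟨_, hG, by simp⟩)
        simp only
        rw [this]
        split_ifs with h
        · exact e1 _ h
        · rfl
      · have h' : t - (f p q).2.2 ∉ F' := fun h => hG (hF' h)
        simp [h', hG]
    · rw [(hTf _ _).1, e2, hq]

open MeasureTheory in
theorem TM_preserves {d n k : ℕ} (hn : 2 ≤ n) (hk : 1 ≤ k)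
    (μ : Measure (Cfg d n k)) [IsFiniteMeasure μ]
    (hμ : ∀ (F : Finset (V d)) (p : V d → Fin n) (q : Fin k),
      μ (cyl F p q) = 1 / ((k : ENNReal) * (n : ENNReal) ^ F.card))
    (T : Cfg d n k → Cfg d n k) (hT : IsTMfix T) (hb : Function.Bijective T) :
    MeasurableEmbedding T ∧ μ.map T = μ := by
  have hemb : MeasurableEmbedding T :=
    ((TM_cont hT).isClosedEmbedding hb.1).measurableEmbedding
  refine ⟨hemb, ?_⟩
  obtain ⟨F, F', f, hf⟩ := hT
  let C : Set (Set (Cfg d n k)) := {s | ∃ G p q, F ∪ F' ⊆ G ∧ s = cyl G p q}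
  have hbasis : TopologicalSpace.IsTopologicalBasis C := by
    refine TopologicalSpace.isTopologicalBasis_of_isOpen_of_nhds ?_ ?_
    · rintro _ ⟨G, p, q, _, rfl⟩
      exact cyl_isOpen G p q
    · intro c U hc hU
      obtain ⟨G, hG⟩ := cyl_nhds c U (hU.mem_nhds hc)
      exact ⟨_, ⟨G ∪ (F ∪ F'), c.1, c.2, Finset.subset_union_right, rfl⟩, cyl_self _ c,
        (cyl_mono Finset.subset_union_left _ _).trans hG⟩
  have hpi : IsPiSystem C := by
    rintro _ ⟨G, p, q, hG, rfl⟩ _ ⟨G', p', q', hG', rfl⟩ ⟨c, hc, hc'⟩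
    refine ⟨G ∪ G', c.1, c.2, hG.trans Finset.subset_union_left, ?_⟩
    ext x
    constructor
    · rintro ⟨h1, h2⟩
      refine ⟨h1.1.trans hc.1.symm, fun v hv => ?_⟩
      rcases Finset.mem_union.1 hv with hv | hv
      · rw [h1.2 v hv, hc.2 v hv]
      · rw [h2.2 v hv, hc'.2 v hv]
    · intro h
      refine ⟨⟨h.1.trans hc.1, fun v hv => ?_⟩, ⟨h.1.trans hc'.1, fun v hv => ?_⟩⟩
      · rw [h.2 v (Finset.mem_union_left _ hv), hc.2 v hv]
      · rw [h.2 v (Finset.mem_union_right _ hv), hc'.2 v hv]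
  have hgen : (inferInstance : MeasurableSpace (Cfg d n k)) = MeasurableSpace.generateFrom C := by
    rw [← hbasis.borel_eq_generateFrom]
    exact BorelSpace.measurable_eq
  have hcomap : μ = μ.comap T := by
    refine ext_of_generate_finite C hgen hpi ?_ ?_
    · rintro _ ⟨G, p, q, hG, rfl⟩
      rw [hemb.comap_apply]
      obtain ⟨G', p', q', hc, he⟩ := image_cyl hf G
        (Finset.subset_union_left.trans hG) (Finset.subset_union_right.trans hG) p q
      rw [he, hμ, hμ, hc]
    · rw [hemb.comap_apply, Set.image_univ, hb.2.range_eq]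
  conv_lhs => rw [hcomap]
  rw [hemb.map_comap, hb.2.range_eq, Measure.restrict_univ]

theorem le_supnorm {d : ℕ} (v : V d) (i : Fin d) : (v i).natAbs ≤ supnorm v :=
  Finset.le_sup (f := fun i => (v i).natAbs) (Finset.mem_univ i)

theorem cocycle {d n k : ℕ} (hn : 2 ≤ n) (i : Fin d)
    (T₁ T₂ : Cfg d n k → Cfg d n k) (hT₂ : Continuous T₂)
    (s₁ s₂ s₁₂ : Cfg d n k → V d)
    (hs₁ : ShiftIndicator T₁ s₁) (hs₂ : ShiftIndicator T₂ s₂)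
    (hs₁₂ : ShiftIndicator (T₁ ∘ T₂) s₁₂) (c : Cfg d n k) :
    s₁₂ c = s₁ (T₂ c) + s₂ c := by
  obtain ⟨c₁, a₁, h₁⟩ := hs₁
  obtain ⟨c₂, a₂, h₂⟩ := hs₂
  obtain ⟨c₁₂, a₁₂, h₁₂⟩ := hs₁₂
  by_contra hne
  obtain ⟨G, hG⟩ := window_of_cont (fun c => (s₁ (T₂ c), s₂ c, s₁₂ c))
    ((c₁.comp hT₂).prodMk (c₂.prodMk c₁₂)) c
  obtain ⟨N, hN⟩ : ∃ N : ℕ, N = a₁ + a₂ + a₁₂ + (s₁ (T₂ c) i).natAbs + (s₁₂ c i).natAbs +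
    (∑ g ∈ G, (g i).natAbs) + 1 := ⟨_, rfl⟩
  let v : V d := fun _ => (N : ℤ)
  have hv : N ≤ supnorm v := le_supnorm v i
  have hv1 : a₂ ≤ supnorm (v - s₁ (T₂ c)) := by
    refine le_trans ?_ (le_supnorm _ i)
    simp only [Pi.sub_apply, v]
    omega
  have hvG : v - s₁₂ c ∉ G := by
    intro hmem
    have := Finset.single_le_sum (f := fun g : V d => (g i).natAbs) (fun _ _ => Nat.zero_le _) hmem
    simp only [Pi.sub_apply, v] at this
    omega
  have key : ∀ c' ∈ cyl G c.1 c.2, c'.1 (v - s₁₂ c) = c'.1 (v - s₁ (T₂ c) - s₂ c) := by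
    intro c' hc'
    have e := hG c' hc'
    simp only [Prod.mk.injEq] at e
    obtain ⟨e1, e2, e3⟩ := e
    rw [← e3, ← h₁₂ c' v (by omega), ← e2, ← h₂ c' _ hv1, ← e1]
    exact h₁ (T₂ c') v (by omega)
  haveI : Nontrivial (Fin n) := Fin.nontrivial_iff_two_le.2 hn
  obtain ⟨z, hz⟩ := exists_ne (c.1 (v - s₁₂ c))
  have k1 := key c (cyl_self G c)
  have k2 := key (Function.update c.1 (v - s₁₂ c) z, c.2) ⟨rfl, fun w hw => by
    have : w ≠ v - s₁₂ c := fun h => hvG (h ▸ hw)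
    simp [Function.update_of_ne this]⟩
  have hne' : v - s₁ (T₂ c) - s₂ c ≠ v - s₁₂ c := by
    intro h
    apply hne
    rw [sub_sub] at h
    exact (sub_right_injective h).symm
  simp only [Function.update_self, Function.update_of_ne hne'] at k2
  exact hz (k2.trans k1.symm)

open MeasureTheory in
/-- For reversible moving-tape machines `T₁, T₂` with shift indicators `s₁, s₂`, and
a shift indicator `s₁₂` of `T₁ ∘ T₂`, the average movement is additive:
`α(T₁ ∘ T₂) = α(T₁) + α(T₂)` (componentwise, `α(T) = ∫ s_T dμ` with `μ` the uniform
measure); that is, `α : RTM_fix(ℤ^d,n,k) → ℚ^d` is a group homomorphism. -/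
theorem averageMovement_additive (d n k : ℕ) (hd : 1 ≤ d) (hn : 2 ≤ n) (hk : 1 ≤ k)
    (μ : Measure (Cfg d n k))
    (hμ : ∀ (F : Finset (V d)) (p : V d → Fin n) (q : Fin k),
      μ {c : Cfg d n k | c.2 = q ∧ ∀ v ∈ F, c.1 v = p v} =
        1 / ((k : ENNReal) * (n : ENNReal) ^ F.card))
    (T₁ T₂ : Cfg d n k → Cfg d n k)
    (h₁ : IsTMfix T₁) (h₂ : IsTMfix T₂)
    (hb₁ : Function.Bijective T₁) (hb₂ : Function.Bijective T₂)
    (s₁ s₂ s₁₂ : Cfg d n k → V d)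
    (hs₁ : ShiftIndicator T₁ s₁) (hs₂ : ShiftIndicator T₂ s₂)
    (hs₁₂ : ShiftIndicator (T₁ ∘ T₂) s₁₂) :
    ∀ i : Fin d,
      ∫ c, ((s₁₂ c i : ℤ) : ℝ) ∂μ =
        (∫ c, ((s₁ c i : ℤ) : ℝ) ∂μ) + ∫ c, ((s₂ c i : ℤ) : ℝ) ∂μ := by
  intro i
  have hμ' : ∀ (F : Finset (V d)) (p : V d → Fin n) (q : Fin k),
      μ (cyl F p q) = 1 / ((k : ENNReal) * (n : ENNReal) ^ F.card) := hμ
  haveI : IsFiniteMeasure μ := by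
    refine ⟨?_⟩
    have hu : (Set.univ : Set (Cfg d n k)) = ⋃ q : Fin k, cyl ∅ (fun _ => ⟨0, by omega⟩) q := by
      ext c; simp [cyl]
    rw [hu]
    refine (measure_iUnion_le _).trans_lt ?_
    rw [tsum_fintype]
    refine ENNReal.sum_lt_top.2 fun q _ => ?_
    rw [hμ']
    refine ENNReal.div_lt_top ENNReal.one_ne_top ?_
    have : k ≠ 0 := by omega
    simpa using this
  obtain ⟨hemb, hmap⟩ := TM_preserves hn hk μ hμ' T₂ h₂ hb₂
  have hco := cocycle hn i T₁ T₂ (TM_cont h₂) s₁ s₂ s₁₂ hs₁ hs₂ hs₁₂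
  have hint : ∀ s : Cfg d n k → V d, Continuous s → Integrable (fun c => ((s c i : ℤ) : ℝ)) μ := by
    intro s hs
    refine Continuous.integrable_of_hasCompactSupport ?_ (HasCompactSupport.of_compactSpace _)
    exact (continuous_of_discreteTopology (f := fun z : V d => ((z i : ℤ) : ℝ))).comp hs
  have e : ∫ c, ((s₁ c i : ℤ) : ℝ) ∂μ = ∫ c, ((s₁ (T₂ c) i : ℤ) : ℝ) ∂μ := by
    conv_lhs => rw [← hmap]
    exact hemb.integral_map _
  rw [e, ← integral_add (hint (fun c => s₁ (T₂ c)) (hs₁.1.comp (TM_cont h₂))) (hint s₂ hs₂.1)]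
  refine integral_congr_ae (Filter.Eventually.of_forall fun c => ?_)
  simp [hco c]
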